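/- arXiv:2401.04895 — 3 statements merged into one kernel-verified Lean document; each statement's English description precedes it below -/
import Mathlib

section
/- Fix an integer n ≥ 1. Let Ω ∈ τ_s(ℍ_s^n) be a slice-open set. Then for every path γ ∈ 𝒫(ℂ^n, Ω) one has r_{γ,Ω} > 0; that is, there exists a real number r > 0 such that B_{𝒫(ℂ^n)}(γ, r) ⊆ 𝒫(ℂ^n, Ω). -/
open scoped ENNReal NNReal

noncomputable section

/-- The real quaternions. -/
abbrev ℍ := Quaternion ℝ

/-- The set `𝕊` of imaginary units of the quaternions. -/
def QS : Set ℍ := {I | I ^ 2 = -1}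

/-- `Ψ_i^I : ℂ^n → ℂ_I^n ⊆ ℍ^n`, sending `x + y i` to `x + y I` componentwise. -/
def PsiI (n : ℕ) (I : ℍ) (z : Fin n → ℂ) : Fin n → ℍ :=
  fun ℓ => algebraMap ℝ ℍ (z ℓ).re + (z ℓ).im • I

/-- The slice `ℂ_I^n = (ℝ + ℝ I)^n ⊆ ℍ^n`. -/
def sliceCn (n : ℕ) (I : ℍ) : Set (Fin n → ℍ) := Set.range (PsiI n I)

/-- The weakly slice cone `ℍ_s^n = ⋃_{I ∈ 𝕊} ℂ_I^n`. -/
def weakSliceCone (n : ℕ) : Set (Fin n → ℍ) := ⋃ I ∈ QS, sliceCn n I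

/-- `Ω` is slice open (i.e. `Ω ∈ τ_s(ℍ_s^n)`): `Ω ⊆ ℍ_s^n` and each slice
`Ω_I = Ω ∩ ℂ_I^n` is open in `ℂ_I^n`, encoded via the homeomorphism `Ψ_i^I`. -/
def sliceOpen (n : ℕ) (Ω : Set (Fin n → ℍ)) : Prop :=
  Ω ⊆ weakSliceCone n ∧ ∀ I ∈ QS, IsOpen (PsiI n I ⁻¹' Ω)

/-- The set `𝒫(ℂ^n)` of continuous paths `[0,1] → ℂ^n` with real start point,
encoded as functions `ℝ → ℂ^n` continuous on `[0,1]`. -/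
def PathsC (n : ℕ) : Set (ℝ → Fin n → ℂ) :=
  {γ | ContinuousOn γ (Set.Icc 0 1) ∧ ∀ ℓ, (γ 0 ℓ).im = 0}

/-- `γ^I([0,1]) ⊆ Ω`. -/
def pathInSlice (n : ℕ) (Ω : Set (Fin n → ℍ)) (I : ℍ) (γ : ℝ → Fin n → ℂ) : Prop :=
  ∀ t ∈ Set.Icc (0 : ℝ) 1, PsiI n I (γ t) ∈ Ω

/-- The set `𝕊(Ω, γ) = {I ∈ 𝕊 : γ^I ⊆ Ω}`. -/
def sliceUnits (n : ℕ) (Ω : Set (Fin n → ℍ)) (γ : ℝ → Fin n → ℂ) : Set ℍ :=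
  {I | I ∈ QS ∧ pathInSlice n Ω I γ}

/-- The set `𝒫(ℂ^n, Ω)`. -/
def PathsIn (n : ℕ) (Ω : Set (Fin n → ℍ)) : Set (ℝ → Fin n → ℂ) :=
  {γ | γ ∈ PathsC n ∧ ∃ I, I ∈ sliceUnits n Ω γ}

/-- The straight segment `𝓛_z^w(t) = (1 - t)z + tw`. -/
def segPath (n : ℕ) (z w : Fin n → ℂ) : ℝ → Fin n → ℂ :=
  fun t => (1 - t) • z + t • w

/-- Concatenation of paths. -/
def concatP (n : ℕ) (γ δ : ℝ → Fin n → ℂ) : ℝ → Fin n → ℂ :=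
  fun t => if t ≤ 1 / 2 then γ (2 * t) else δ (2 * t - 1)

/-- `𝓛_γ(z) := γ ∘ 𝓛_{γ(1)}^z`, the extension of `γ` by the segment from `γ(1)` to `z`. -/
def extendPath (n : ℕ) (γ : ℝ → Fin n → ℂ) (z : Fin n → ℂ) : ℝ → Fin n → ℂ :=
  concatP n γ (segPath n (γ 1) z)

/-- The ball `B_{𝒫(ℂ^n)}(γ, r)` in path space. -/
def pathBall (n : ℕ) (γ : ℝ → Fin n → ℂ) (r : ℝ) : Set (ℝ → Fin n → ℂ) :=
  {β | ∃ z ∈ Metric.ball (γ 1) r, β = extendPath n γ z}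

/-- `B_I(c^I, r) ⊆ Ω_I`, encoded via `Ψ_i^I`. -/
def ballInSlice (n : ℕ) (Ω : Set (Fin n → ℍ)) (I : ℍ) (c : Fin n → ℂ) (r : ℝ) : Prop :=
  ∀ w ∈ Metric.ball c r, PsiI n I w ∈ Ω

/-- `r_{γ,Ω}`, as an extended nonnegative real. -/
def rPath (n : ℕ) (Ω : Set (Fin n → ℍ)) (γ : ℝ → Fin n → ℂ) : ℝ≥0∞ :=
  sSup {x : ℝ≥0∞ | ∃ r : ℝ≥0, x = r ∧ pathBall n γ r ⊆ PathsIn n Ω}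

/-- `r^{𝕊'}_{γ,Ω}`, as an extended nonnegative real. -/
def rSliceSet (n : ℕ) (Ω : Set (Fin n → ℍ)) (γ : ℝ → Fin n → ℂ) (S' : Set ℍ) : ℝ≥0∞ :=
  sSup {x : ℝ≥0∞ | ∃ r : ℝ≥0, x = r ∧ ∀ I ∈ S', ballInSlice n Ω I (γ 1) r}

/-- `r²_{γ,Ω}`, as an extended nonnegative real. -/
def r2Slice (n : ℕ) (Ω : Set (Fin n → ℍ)) (γ : ℝ → Fin n → ℂ) : ℝ≥0∞ :=
  sSup {x : ℝ≥0∞ | ∃ S'' : Set ℍ, S'' ⊆ sliceUnits n Ω γ ∧ S''.Nontrivial ∧ x = rSliceSet n Ω γ S''}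

/-- `r^I_{γ,Ω}`, as an extended nonnegative real. -/
def rISlice (n : ℕ) (Ω : Set (Fin n → ℍ)) (γ : ℝ → Fin n → ℂ) (I : ℍ) : ℝ≥0∞ :=
  sSup {x : ℝ≥0∞ | ∃ r : ℝ≥0, x = r ∧ ballInSlice n Ω I (γ 1) r}

/-- `Ω` is real-path-connected. -/
def realPathConnected (n : ℕ) (Ω : Set (Fin n → ℍ)) : Prop :=
  ∀ q ∈ Ω, ∃ γ ∈ PathsIn n Ω, ∃ I ∈ sliceUnits n Ω γ, PsiI n I (γ 1) = q

/-- `Ω₂` is `Ω₁`-stem-preserving. -/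
def stemPreserving (n : ℕ) (Ω₁ Ω₂ : Set (Fin n → ℍ)) : Prop :=
  (∀ γ ∈ PathsIn n Ω₁, (sliceUnits n Ω₂ γ).Nontrivial) ∧
  (∀ α ∈ PathsIn n Ω₁, ∀ β ∈ PathsIn n Ω₁, α 1 = β 1 →
    ¬ ∃ I, sliceUnits n Ω₂ α ∩ sliceUnits n Ω₂ β = {I})

/-- `F : 𝒫(ℂ^n, Ω) → ℍ^{2×1}` is a (path-slice) stem function of `f`:
`f(γ^I(1)) = (1, I)·F(γ)`. -/
def isStemOf (n : ℕ) (Ω : Set (Fin n → ℍ)) (f : (Fin n → ℍ) → ℍ)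
    (F : (ℝ → Fin n → ℂ) → ℍ × ℍ) : Prop :=
  ∀ γ ∈ PathsIn n Ω, ∀ I ∈ sliceUnits n Ω γ, f (PsiI n I (γ 1)) = (F γ).1 + I * (F γ).2

/-- `f` is a path-slice function on `Ω`. -/
def PathSliceFn (n : ℕ) (Ω : Set (Fin n → ℍ)) (f : (Fin n → ℍ) → ℍ) : Prop :=
  ∃ F, isStemOf n Ω f F

/-- `f` is (weakly) slice regular on `Ω`: each restriction `f_I` is real differentiable
and satisfies the Cauchy-Riemann equations `(∂/∂x_ℓ + I ∂/∂y_ℓ) f_I = 0`. -/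
def SliceRegular (n : ℕ) (Ω : Set (Fin n → ℍ)) (f : (Fin n → ℍ) → ℍ) : Prop :=
  ∀ I ∈ QS,
    DifferentiableOn ℝ (fun z => f (PsiI n I z)) (PsiI n I ⁻¹' Ω) ∧
    ∀ z ∈ PsiI n I ⁻¹' Ω, ∀ ℓ : Fin n,
      fderivWithin ℝ (fun z => f (PsiI n I z)) (PsiI n I ⁻¹' Ω) z (Pi.single ℓ 1)
        + I * fderivWithin ℝ (fun z => f (PsiI n I z)) (PsiI n I ⁻¹' Ω) z
            (Pi.single ℓ Complex.I) = 0

open Classical in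
/-- `F_{Ω₁}^f` : a choice of stem function of the path-slice function `f : Ω₂ → ℍ`
(its restriction to `𝒫(ℂ^n, Ω₁)` is independent of the choice). -/
def stemF (n : ℕ) (Ω₂ : Set (Fin n → ℍ)) (f : (Fin n → ℍ) → ℍ) :
    (ℝ → Fin n → ℂ) → ℍ × ℍ :=
  if h : ∃ F, isStemOf n Ω₂ f F then h.choose else fun _ => 0

open Classical in
/-- The map `ℑ : ℍ_s^n → 𝕊 ∪ {0}`. -/
def scrI {n : ℕ} (q : Fin n → ℍ) : ℍ :=
  if h : (Finset.univ.filter fun ℓ : Fin n => Quaternion.im (q ℓ) ≠ 0).Nonempty then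
    ‖Quaternion.im (q ((Finset.univ.filter
        fun ℓ : Fin n => Quaternion.im (q ℓ) ≠ 0).min' h))‖⁻¹ •
      Quaternion.im (q ((Finset.univ.filter
        fun ℓ : Fin n => Quaternion.im (q ℓ) ≠ 0).min' h))
  else 0

open Classical in
/-- The map `ℱ_{Ω₁}^g : Ω₁ → ℍ^{2×1}`. -/
def scrF (n : ℕ) (Ω₁ Ω₂ : Set (Fin n → ℍ)) (g : (Fin n → ℍ) → ℍ) (q : Fin n → ℍ) :
    ℍ × ℍ :=
  if h : (∃ ℓ, Quaternion.im (q ℓ) ≠ 0) ∧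
      ∃ γ, γ ∈ PathsIn n Ω₁ ∧ pathInSlice n Ω₁ (scrI q) γ ∧ PsiI n (scrI q) (γ 1) = q then
    stemF n Ω₂ g h.2.choose
  else (g q, 0)

/-- The `*`-product `(f*g)(q) = (f(q), ℑ(q)f(q))·ℱ_{Ω₁}^g(q)`. -/
def starProd (n : ℕ) (Ω₁ Ω₂ : Set (Fin n → ℍ)) (f g : (Fin n → ℍ) → ℍ) :
    (Fin n → ℍ) → ℍ :=
  fun q => f q * (scrF n Ω₁ Ω₂ g q).1 + scrI q * f q * (scrF n Ω₁ Ω₂ g q).2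

/-- Componentwise complex conjugate of a path. -/
def conjPath (n : ℕ) (γ : ℝ → Fin n → ℂ) : ℝ → Fin n → ℂ :=
  fun t ℓ => starRingEnd ℂ (γ t ℓ)

end

/-!
Fix `I ∈ 𝕊` with `γ^I([0,1]) ⊆ Ω`. The slice `Ω_I` is open and contains `γ^I(1)`, hence contains a
ball around it. That ball is convex, so for every `z` in it the segment from `γ(1)` to `z` stays in
the slice, and the same unit `I` witnesses that the extended path lies in `𝒫(ℂ^n, Ω)`.
-/

section Paths

open Set

variable {n : ℕ} {γ δ : ℝ → Fin n → ℂ} {t : ℝ}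

theorem concatP_of_le_half (ht : t ≤ 1 / 2) : concatP n γ δ t = γ (2 * t) :=
  if_pos ht

theorem concatP_of_half_le (h : γ 1 = δ 0) (ht : 1 / 2 ≤ t) :
    concatP n γ δ t = δ (2 * t - 1) := by
  rcases ht.eq_or_lt with rfl | ht
  · rw [concatP_of_le_half le_rfl]
    norm_num [h]
  · exact if_neg ht.not_ge

theorem continuousOn_concatP (hγ : ContinuousOn γ (Icc 0 1)) (hδ : ContinuousOn δ (Icc 0 1))
    (h : γ 1 = δ 0) : ContinuousOn (concatP n γ δ) (Icc 0 1) := by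
  have first_half : ContinuousOn (concatP n γ δ) (Icc 0 (1 / 2)) := by
    have mapsTo : MapsTo (fun t : ℝ => 2 * t) (Icc 0 (1 / 2)) (Icc 0 1) :=
      fun t ht => ⟨by linarith [ht.1], by linarith [ht.2]⟩
    exact (hγ.comp (by fun_prop) mapsTo).congr fun t ht => concatP_of_le_half ht.2
  have second_half : ContinuousOn (concatP n γ δ) (Icc (1 / 2) 1) := by
    have mapsTo : MapsTo (fun t : ℝ => 2 * t - 1) (Icc (1 / 2) 1) (Icc 0 1) :=
      fun t ht => ⟨by linarith [ht.1], by linarith [ht.2]⟩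
    exact (hδ.comp (by fun_prop) mapsTo).congr fun t ht => concatP_of_half_le h ht.1
  rw [← Icc_union_Icc_eq_Icc (b := (1 / 2 : ℝ)) (by norm_num) (by norm_num)]
  exact first_half.union_of_isClosed second_half isClosed_Icc isClosed_Icc

theorem mapsTo_concatP {S : Set (Fin n → ℂ)} (hγ : MapsTo γ (Icc 0 1) S)
    (hδ : MapsTo δ (Icc 0 1) S) : MapsTo (concatP n γ δ) (Icc 0 1) S := by
  rintro t ⟨ht₀, ht₁⟩
  unfold concatP
  split_ifs with ht
  · exact hγ ⟨by linarith, by linarith⟩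
  · exact hδ ⟨by linarith, by linarith⟩

theorem concatP_mem_PathsC (hγ : γ ∈ PathsC n) (hδ : ContinuousOn δ (Icc 0 1)) (h : γ 1 = δ 0) :
    concatP n γ δ ∈ PathsC n := by
  refine ⟨continuousOn_concatP hγ.1 hδ h, fun ℓ => ?_⟩
  rw [concatP_of_le_half (by norm_num), mul_zero]
  exact hγ.2 ℓ

theorem segPath_eq_lineMap (z w : Fin n → ℂ) : segPath n z w = AffineMap.lineMap z w :=
  funext fun t => (AffineMap.lineMap_apply_module z w t).symm

theorem extendPath_mem_PathsC (hγ : γ ∈ PathsC n) (z : Fin n → ℂ) :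
    extendPath n γ z ∈ PathsC n := by
  refine concatP_mem_PathsC hγ ?_ ?_ <;> rw [segPath_eq_lineMap]
  · exact AffineMap.lineMap_continuous.continuousOn
  · exact (AffineMap.lineMap_apply_zero _ _).symm

theorem mapsTo_extendPath {S : Set (Fin n → ℂ)} {z : Fin n → ℂ} (hγ : MapsTo γ (Icc 0 1) S)
    (hz : segment ℝ (γ 1) z ⊆ S) : MapsTo (extendPath n γ z) (Icc 0 1) S := by
  refine mapsTo_concatP hγ fun t ht => hz ?_
  rw [segPath_eq_lineMap, segment_eq_image_lineMap]
  exact mem_image_of_mem _ ht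

end Paths

section SliceOpen

variable {n : ℕ} {Ω : Set (Fin n → ℍ)} {γ : ℝ → Fin n → ℂ} {I : ℍ}

theorem sliceOpen.exists_ballInSlice (hΩ : sliceOpen n Ω) (hI : I ∈ QS) {c : Fin n → ℂ}
    (hc : PsiI n I c ∈ Ω) : ∃ r : ℝ, 0 < r ∧ ballInSlice n Ω I c r :=
  Metric.isOpen_iff.mp (hΩ.2 I hI) c hc

theorem pathBall_subset_PathsIn {r : ℝ} (hγ : γ ∈ PathsC n) (hI : I ∈ sliceUnits n Ω γ)
    (hr : ballInSlice n Ω I (γ 1) r) : pathBall n γ r ⊆ PathsIn n Ω := by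
  rintro _ ⟨z, hz, rfl⟩
  have segment_subset_ball : segment ℝ (γ 1) z ⊆ Metric.ball (γ 1) r :=
    (convex_ball (γ 1) r).segment_subset (Metric.mem_ball_self (Metric.pos_of_mem_ball hz)) hz
  have extend_in_slice : pathInSlice n Ω I (extendPath n γ z) :=
    mapsTo_extendPath (S := PsiI n I ⁻¹' Ω) hI.2 (segment_subset_ball.trans hr)
  exact ⟨extendPath_mem_PathsC hγ z, I, hI.1, extend_in_slice⟩

theorem ofReal_le_rPath {r : ℝ} (h : pathBall n γ r ⊆ PathsIn n Ω) :
    ENNReal.ofReal r ≤ rPath n Ω γ := by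
  rcases le_total r 0 with hr | hr
  · simp [ENNReal.ofReal_of_nonpos hr]
  · exact le_sSup ⟨r.toNNReal, rfl, by rwa [Real.coe_toNNReal r hr]⟩

end SliceOpen

theorem statement0 (n : ℕ) (hn : 1 ≤ n) (Ω : Set (Fin n → ℍ)) (hΩ : sliceOpen n Ω)
    (γ : ℝ → Fin n → ℂ) (hγ : γ ∈ PathsIn n Ω) :
    0 < rPath n Ω γ ∧ ∃ r : ℝ, 0 < r ∧ pathBall n γ r ⊆ PathsIn n Ω := by
  obtain ⟨hγC, I, hI⟩ := hγ
  have endpoint_mem : PsiI n I (γ 1) ∈ Ω := hI.2 1 (Set.right_mem_Icc.mpr zero_le_one)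
  obtain ⟨r, hr, hball⟩ := hΩ.exists_ballInSlice hI.1 endpoint_mem
  have hsub : pathBall n γ r ⊆ PathsIn n Ω := pathBall_subset_PathsIn hγC hI hball
  exact ⟨(ENNReal.ofReal_pos.mpr hr).trans_le (ofReal_le_rPath hsub), r, hr, hsub⟩
end

section
/- Fix an integer n ≥ 1. Let Ω₁ ∈ τ_s(ℍ_s^n) be real-path-connected, let Ω₂ ∈ τ_s(ℍ_s^n) be Ω₁-stem-preserving, let γ ∈ 𝒫(ℂ^n, Ω₁), and let r₁ be a real number with 0 < r₁ < min{r²_{γ,Ω₂}, r_{γ,Ω₁}}. Then B_{𝒫(ℂ^n)}(γ, r₁) ⊆ 𝒫(ℂ^n, Ω₁), and there exist two distinct elements I, J ∈ 𝕊(Ω₂, γ) such that for every β ∈ B_{𝒫(ℂ^n)}(γ, r₁) one has β^I([0,1]) ⊆ Ω₂ and β^J([0,1]) ⊆ Ω₂. -/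
open scoped ENNReal NNReal

/-!
The conditions whose suprema define `r_{γ,Ω}` and `r^{𝕊'}_{γ,Ω}` pass to smaller radii, so they
hold at every radius below the supremum. A path in the ball around `γ` is `γ` followed by a segment
issuing from `γ(1)`, and by convexity this segment stays in the ball around `γ(1)`; hence on each
slice where both `γ` and that ball lie in `Ω₂`, so does every path in the ball around `γ`.
-/

section

variable {n : ℕ} {Ω : Set (Fin n → ℍ)} {I : ℍ} {γ δ : ℝ → Fin n → ℂ} {c z w : Fin n → ℂ} {r : ℝ}

theorem ballInSlice_antitone : Antitone (ballInSlice n Ω I c) :=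
  fun _ _ hrs h w hw ↦ h w (Metric.ball_subset_ball hrs hw)

theorem pathBall_mono : Monotone (pathBall n γ) :=
  fun _ _ hrs _ ⟨z, hz, hβ⟩ ↦ ⟨z, Metric.ball_subset_ball hrs hz, hβ⟩

theorem ballInSlice.pathInSlice_segPath (h : ballInSlice n Ω I c r) (hz : z ∈ Metric.ball c r)
    (hw : w ∈ Metric.ball c r) : pathInSlice n Ω I (segPath n z w) :=
  fun _ ht ↦ h _ (convex_ball c r hz hw (sub_nonneg.2 ht.2) ht.1 (sub_add_cancel _ _))

theorem pathInSlice.concat (hγ : pathInSlice n Ω I γ) (hδ : pathInSlice n Ω I δ) :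
    pathInSlice n Ω I (concatP n γ δ) := by
  intro t ⟨ht₀, ht₁⟩
  unfold concatP
  split_ifs with ht
  · exact hγ _ ⟨by linarith, by linarith⟩
  · exact hδ _ ⟨by linarith, by linarith⟩

theorem pathInSlice.of_mem_pathBall {β : ℝ → Fin n → ℂ} (hγ : pathInSlice n Ω I γ)
    (hball : ballInSlice n Ω I (γ 1) r) (hβ : β ∈ pathBall n γ r) : pathInSlice n Ω I β := by
  obtain ⟨z, hz, rfl⟩ := hβ
  have hcenter : γ 1 ∈ Metric.ball (γ 1) r := Metric.mem_ball_self (Metric.pos_of_mem_ball hz)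
  exact hγ.concat (hball.pathInSlice_segPath hcenter hz)

theorem of_ofReal_lt_sSup {P : ℝ → Prop} (hP : Antitone P)
    (hr : ENNReal.ofReal r < sSup {x : ℝ≥0∞ | ∃ s : ℝ≥0, x = s ∧ P s}) : P r := by
  obtain ⟨_, ⟨s, rfl, hs⟩, hrs⟩ := lt_sSup_iff.1 hr
  exact hP (ENNReal.ofReal_le_coe.1 hrs.le) hs

theorem pathBall_subset_of_ofReal_lt_rPath (hr : ENNReal.ofReal r < rPath n Ω γ) :
    pathBall n γ r ⊆ PathsIn n Ω :=
  of_ofReal_lt_sSup (P := fun s ↦ pathBall n γ s ⊆ PathsIn n Ω)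
    (fun _ _ hrs ↦ (pathBall_mono hrs).trans) hr

theorem ballInSlice_of_ofReal_lt_rSliceSet {S : Set ℍ}
    (hr : ENNReal.ofReal r < rSliceSet n Ω γ S) (hI : I ∈ S) : ballInSlice n Ω I (γ 1) r :=
  of_ofReal_lt_sSup (P := fun s ↦ ∀ J ∈ S, ballInSlice n Ω J (γ 1) s)
    (fun _ _ hrs h J hJ ↦ ballInSlice_antitone hrs (h J hJ)) hr I hI

theorem exists_nontrivial_ballInSlice_of_ofReal_lt_r2Slice
    (hr : ENNReal.ofReal r < r2Slice n Ω γ) :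
    ∃ S ⊆ sliceUnits n Ω γ, S.Nontrivial ∧ ∀ I ∈ S, ballInSlice n Ω I (γ 1) r := by
  obtain ⟨_, ⟨S, hS, hSnontrivial, rfl⟩, hrS⟩ := lt_sSup_iff.1 hr
  exact ⟨S, hS, hSnontrivial, fun _ ↦ ballInSlice_of_ofReal_lt_rSliceSet hrS⟩

end

theorem statement2_general {n : ℕ} {Ω₁ Ω₂ : Set (Fin n → ℍ)} {γ : ℝ → Fin n → ℂ} {r₁ : ℝ}
    (hlt : ENNReal.ofReal r₁ < min (r2Slice n Ω₂ γ) (rPath n Ω₁ γ)) :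
    pathBall n γ r₁ ⊆ PathsIn n Ω₁ ∧
      ∃ I ∈ sliceUnits n Ω₂ γ, ∃ J ∈ sliceUnits n Ω₂ γ, I ≠ J ∧
        ∀ β ∈ pathBall n γ r₁, pathInSlice n Ω₂ I β ∧ pathInSlice n Ω₂ J β := by
  obtain ⟨hlt_r2Slice, hlt_rPath⟩ := lt_min_iff.1 hlt
  obtain ⟨S, hS, ⟨I, hI, J, hJ, hIJ⟩, hball⟩ :=
    exists_nontrivial_ballInSlice_of_ofReal_lt_r2Slice hlt_r2Slice
  have hunits {K : ℍ} (hK : K ∈ S) : ∀ β ∈ pathBall n γ r₁, pathInSlice n Ω₂ K β :=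
    fun _ ↦ (hS hK).2.of_mem_pathBall (hball K hK)
  exact ⟨pathBall_subset_of_ofReal_lt_rPath hlt_rPath, I, hS hI, J, hS hJ, hIJ,
    fun β hβ ↦ ⟨hunits hI β hβ, hunits hJ β hβ⟩⟩

theorem statement2 (n : ℕ) (hn : 1 ≤ n) (Ω₁ Ω₂ : Set (Fin n → ℍ))
    (hΩ₁ : sliceOpen n Ω₁) (hrc : realPathConnected n Ω₁)
    (hΩ₂ : sliceOpen n Ω₂) (hsp : stemPreserving n Ω₁ Ω₂)
    (γ : ℝ → Fin n → ℂ) (hγ : γ ∈ PathsIn n Ω₁)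
    (r₁ : ℝ) (hr₁ : 0 < r₁)
    (hlt : ENNReal.ofReal r₁ < min (r2Slice n Ω₂ γ) (rPath n Ω₁ γ)) :
    pathBall n γ r₁ ⊆ PathsIn n Ω₁ ∧
      ∃ I ∈ sliceUnits n Ω₂ γ, ∃ J ∈ sliceUnits n Ω₂ γ, I ≠ J ∧
        ∀ β ∈ pathBall n γ r₁, pathInSlice n Ω₂ I β ∧ pathInSlice n Ω₂ J β :=
  statement2_general hlt
end

section
/- Fix an integer n ≥ 1. Let Ω₁ ∈ τ_s(ℍ_s^n) be real-path-connected, let Ω₂ ∈ τ_s(ℍ_s^n) be Ω₁-stem-preserving, let γ ∈ 𝒫(ℂ^n, Ω₁), and let f ∈ 𝒮ℛ(Ω₂). Let r₁ be a real number with 0 < r₁ < min{r²_{γ,Ω₂}, r_{γ,Ω₁}}, and let I, J ∈ 𝕊(Ω₂, γ) be distinct elements such that β^I([0,1]) ⊆ Ω₂ and β^J([0,1]) ⊆ Ω₂ for every β ∈ B_{𝒫(ℂ^n)}(γ, r₁) ⊆ 𝒫(ℂ^n, Ω₁). Then for every z ∈ B_{ℂ^n}(γ(1), r₁), the value F_{Ω₁}^f(𝓛_γ(z))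 ∈ ℍ^{2×1} is the unique solution of the system (1, I)·F = f(Ψ_i^I(z)), (1, J)·F = f(Ψ_i^J(z)); explicitly, writing F_{Ω₁}^f(𝓛_γ(z)) = (F₁, F₂)^T, one has F₂ = (J − I)^{-1}(f(Ψ_i^J(z)) − f(Ψ_i^I(z))) and F₁ = f(Ψ_i^I(z)) − I·F₂. -/
open scoped ENNReal NNReal

/-!
Let `I ≠ J` and `K` be units whose copies of a path `γ` stay in `Ω`. The weight
`(K - J) * (I - J)⁻¹` intertwines left multiplication by `I` and by `K`, because
`K * (K - J) = -(K * J) - 1 = (K - J) * (-J)`. Hence the Lagrange interpolation in `K` of `f_I` and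
`f_J` is holomorphic for the complex structure `K * ·` on `ℍ`, as is `f_K`. The two functions agree
at real points, since the weights sum to one, and an identity theorem in several variables carries
the equality along `γ` from its real starting point. The interpolation is affine in `K`, which gives
a stem function for `f`, and two distinct units determine its value at each path.
-/

open Filter Topology

section IdentityTheorem

variable {E F : Type*} [NormedAddCommGroup E] [NormedSpace ℂ E]
  [NormedAddCommGroup F] [NormedSpace ℂ F] [CompleteSpace F]

lemma eq_zero_of_frequently_eq_zero_on_line {g : E → F} {B : Set E} (hBo : IsOpen B)
    (hBc : Convex ℝ B) (hg : DifferentiableOn ℂ g B) {w v : E} (hw : w ∈ B)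
    (hfreq : ∃ᶠ ζ in 𝓝[≠] (0 : ℂ), g (w + ζ • v) = 0) {a : ℂ} (ha : w + a • v ∈ B) :
    g (w + a • v) = 0 := by
  let line : ℂ → E := fun ζ => w + ζ • v
  have line_holo : Differentiable ℂ line := by fun_prop
  have preimage_convex : Convex ℝ (line ⁻¹' B) :=
    (hBc.translate_preimage_right w).linear_preimage
      ((LinearMap.toSpanSingleton ℂ E v).restrictScalars ℝ)
  have comp_analytic : AnalyticOnNhd ℂ (g ∘ line) (line ⁻¹' B) :=
    (hg.comp line_holo.differentiableOn fun _ h => h).analyticOnNhd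
      (hBo.preimage line_holo.continuous)
  have zero_mem : (0 : ℂ) ∈ line ⁻¹' B := by simpa [line] using hw
  exact comp_analytic.eqOn_zero_of_preconnected_of_frequently_eq_zero
    preimage_convex.isPreconnected zero_mem hfreq ha

theorem eqOn_zero_of_eventuallyEq_zero {g : E → F} {U : Set E} (hU : IsOpen U)
    (hUc : IsPreconnected U) (hg : DifferentiableOn ℂ g U) {p : E} (hp : p ∈ U)
    (hgp : g =ᶠ[𝓝 p] 0) : Set.EqOn g 0 U := by
  have subset_locus : U ⊆ {z | ∀ᶠ w in 𝓝 z, g w = 0} := by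
    refine hUc.subset_of_closure_inter_subset isOpen_setOfPred_eventually_nhds ⟨p, hp, hgp⟩ ?_
    rintro q ⟨hq, hqU⟩
    obtain ⟨r, hr, hrU⟩ := Metric.isOpen_iff.1 hU q hqU
    obtain ⟨w, hw, hqw⟩ := Metric.mem_closure_iff.1 hq r hr
    filter_upwards [Metric.ball_mem_nhds q hr] with z hz
    have line_tendsto : Tendsto (fun ζ : ℂ => w + ζ • (z - w)) (𝓝 0) (𝓝 w) :=
      Continuous.tendsto' (by fun_prop) _ _ (by simp)
    simpa using eq_zero_of_frequently_eq_zero_on_line (v := z - w) (a := 1) Metric.isOpen_ball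
      (convex_ball q r) (hg.mono hrU) (Metric.mem_ball'.2 hqw)
      ((line_tendsto.eventually hw).filter_mono nhdsWithin_le_nhds).frequently
      (by simpa using hz)
  exact fun z hz => (subset_locus hz).self_of_nhds

lemma eventuallyEq_zero_of_eq_zero_on_real {ι : Type*} [Finite ι] {g : (ι → ℂ) → F}
    {U : Set (ι → ℂ)} (hU : IsOpen U) (hg : DifferentiableOn ℂ g U)
    (hreal : ∀ x ∈ U, (∀ l, (x l).im = 0) → g x = 0)
    {p : ι → ℂ} (hpU : p ∈ U) (hp : ∀ l, (p l).im = 0) : g =ᶠ[𝓝 p] 0 := by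
  have := Fintype.ofFinite ι
  obtain ⟨r, hr, hrU⟩ := Metric.isOpen_iff.1 hU p hpU
  let re : (ι → ℂ) → ι → ℂ := fun z l => (z l).re
  let im : (ι → ℂ) → ι → ℂ := fun z l => (z l).im
  have re_p : re p = p := funext fun l => Complex.ext rfl (hp l).symm
  have re_tendsto : Tendsto re (𝓝 p) (𝓝 p) := Continuous.tendsto' (by fun_prop) _ _ re_p
  have ball_mem := Metric.ball_mem_nhds p hr
  filter_upwards [ball_mem, re_tendsto ball_mem] with z hz hre
  -- `z` lies on the complex line `ζ ↦ re z + ζ • im z`, whose points are real for real `ζ`.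
  have z_eq : re z + Complex.I • im z = z := by
    ext l
    simp only [re, im, Pi.add_apply, Pi.smul_apply, smul_eq_mul, mul_comm Complex.I,
      Complex.re_add_im]
  have real_tendsto : Tendsto (fun s : ℝ => re z + (s : ℂ) • im z) (𝓝 0) (𝓝 (re z)) :=
    Continuous.tendsto' (by fun_prop) _ _ (by simp)
  have vanish_real : ∀ᶠ s : ℝ in 𝓝[≠] 0, g (re z + (s : ℂ) • im z) = 0 := by
    filter_upwards [nhdsWithin_le_nhds (real_tendsto (hU.mem_nhds (hrU hre)))] with s hs
    exact hreal _ hs fun l => by simp [re, im]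
  have ofReal_tendsto : Tendsto ((↑) : ℝ → ℂ) (𝓝[≠] 0) (𝓝[≠] 0) :=
    (Complex.continuous_ofReal.tendsto' 0 0 Complex.ofReal_zero).inf
      (tendsto_principal_principal.2 fun _ => Complex.ofReal_ne_zero.2)
  rw [← z_eq] at hz ⊢
  exact eq_zero_of_frequently_eq_zero_on_line Metric.isOpen_ball (convex_ball p r) (hg.mono hrU)
    hre (ofReal_tendsto.frequently vanish_real.frequently) hz

theorem eq_zero_of_path_of_eq_zero_on_real {n : ℕ} {g : (Fin n → ℂ) → F}
    {U : Set (Fin n → ℂ)} (hU : IsOpen U) (hg : DifferentiableOn ℂ g U)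
    (hreal : ∀ x ∈ U, (∀ l, (x l).im = 0) → g x = 0)
    {γ : ℝ → Fin n → ℂ} (hγ : γ ∈ PathsC n) (hγU : ∀ t ∈ Set.Icc (0 : ℝ) 1, γ t ∈ U) :
    g (γ 1) = 0 := by
  have start_mem : γ 0 ∈ U := hγU 0 (Set.left_mem_Icc.2 zero_le_one)
  have path_subset : γ '' Set.Icc 0 1 ⊆ connectedComponentIn U (γ 0) :=
    (isPreconnected_Icc.image γ hγ.1).subset_connectedComponentIn
      (Set.mem_image_of_mem γ (Set.left_mem_Icc.2 zero_le_one)) (Set.image_subset_iff.2 hγU)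
  exact eqOn_zero_of_eventuallyEq_zero hU.connectedComponentIn isPreconnected_connectedComponentIn
    (hg.mono (connectedComponentIn_subset U _)) (mem_connectedComponentIn start_mem)
    (eventuallyEq_zero_of_eq_zero_on_real hU hg hreal start_mem hγ.2)
    (path_subset (Set.mem_image_of_mem γ (Set.right_mem_Icc.2 zero_le_one)))

end IdentityTheorem

section ImaginaryUnits

variable {I : ℍ}

lemma mul_self_of_mem_QS (hI : I ∈ QS) : I * I = -1 :=
  (sq I).symm.trans hI

lemma normSq_of_mem_QS (hI : I ∈ QS) : Quaternion.normSq I = 1 := by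
  have h : Quaternion.normSq I ^ 2 = 1 := by
    rw [← map_pow, show I ^ 2 = -1 from hI, Quaternion.normSq_neg, map_one]
  exact (pow_eq_one_iff_of_nonneg Quaternion.normSq_nonneg two_ne_zero).1 h

lemma re_of_mem_QS (hI : I ∈ QS) : I.re = 0 := by
  rw [← Quaternion.sq_eq_neg_normSq, normSq_of_mem_QS hI]
  exact hI

lemma norm_liftAux_of_mem_QS (hI : I ∈ QS) (z : ℂ) :
    ‖Complex.liftAux I (mul_self_of_mem_QS hI) z‖ = ‖z‖ := by
  refine (sq_eq_sq₀ (norm_nonneg _) (norm_nonneg _)).1 ?_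
  rw [sq, ← Quaternion.normSq_eq_norm_mul_self, Complex.liftAux_apply, Quaternion.normSq_add,
    Quaternion.normSq_smul, normSq_of_mem_QS hI, ← Complex.normSq_eq_norm_sq,
    Complex.normSq_apply, Quaternion.algebraMap_def, Quaternion.normSq_coe]
  simp [re_of_mem_QS hI, sq]

/-- The complex normed space structure on `ℍ` in which `Complex.I` acts as left multiplication by
the imaginary unit `I`. It depends on `I`, so it is never registered as a global instance. -/
noncomputable abbrev leftNormedSpace (hI : I ∈ QS) : NormedSpace ℂ ℍ where
  __ := Module.compHom ℍ (Complex.liftAux I (mul_self_of_mem_QS hI)).toRingHom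
  norm_smul_le z q := by
    change ‖Complex.liftAux I (mul_self_of_mem_QS hI) z * q‖ ≤ ‖z‖ * ‖q‖
    rw [norm_mul, norm_liftAux_of_mem_QS hI]

end ImaginaryUnits

section LeftHolomorphic

variable {E : Type*} [NormedAddCommGroup E] [NormedSpace ℝ E] [NormedSpace ℂ E]
  {I K c : ℍ} {g h : E → ℍ} {z : E}

/-- `g` is holomorphic at `z` for the complex structure on `ℍ` given by left multiplication by `I`:
its real derivative intertwines multiplication by `Complex.I` with left multiplication by `I`. -/
def LeftHolomorphicAt (I : ℍ) (g : E → ℍ) (z : E) : Prop :=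
  ∃ g' : E →L[ℝ] ℍ, HasFDerivAt g g' z ∧ ∀ v, g' (Complex.I • v) = I * g' v

namespace LeftHolomorphicAt

lemma add (hg : LeftHolomorphicAt I g z) (hh : LeftHolomorphicAt I h z) :
    LeftHolomorphicAt I (fun w => g w + h w) z := by
  obtain ⟨g', hg', hgI⟩ := hg
  obtain ⟨h', hh', hhI⟩ := hh
  exact ⟨g' + h', hg'.add hh', fun v => by simp [hgI, hhI, mul_add]⟩

lemma sub (hg : LeftHolomorphicAt I g z) (hh : LeftHolomorphicAt I h z) :
    LeftHolomorphicAt I (fun w => g w - h w) z := by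
  obtain ⟨g', hg', hgI⟩ := hg
  obtain ⟨h', hh', hhI⟩ := hh
  exact ⟨g' - h', hg'.sub hh', fun v => by simp [hgI, hhI, mul_sub]⟩

lemma const_mul (hc : SemiconjBy c I K) (hg : LeftHolomorphicAt I g z) :
    LeftHolomorphicAt K (fun w => c * g w) z := by
  obtain ⟨g', hg', hgI⟩ := hg
  refine ⟨c • g', hg'.const_mul c, fun v => ?_⟩
  simp only [_root_.smul_apply, smul_eq_mul, hgI, ← mul_assoc, hc.eq]

lemma differentiableAt [IsScalarTower ℝ ℂ E] (hI : I ∈ QS) (hg : LeftHolomorphicAt I g z) :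
    letI := leftNormedSpace hI
    DifferentiableAt ℂ g z := by
  let := leftNormedSpace hI
  have smul_def (c : ℂ) (q : ℍ) : c • q = c.re • q + c.im • (I * q) := by
    change Complex.liftAux I (mul_self_of_mem_QS hI) c * q = _
    rw [Complex.liftAux_apply, add_mul, smul_mul_assoc, ← Algebra.smul_def]
  have : IsScalarTower ℝ ℂ ℍ := ⟨fun r c q => by
    simp only [smul_def, Complex.smul_re, Complex.smul_im, smul_add, smul_assoc]⟩
  obtain ⟨g', hg', hgI⟩ := hg
  let complexDeriv : E →L[ℂ] ℍ :=
    { g' with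
      map_smul' := fun c v => by
        have hcv : c • v = c.re • v + c.im • (Complex.I • v) := by
          rw [← smul_assoc, ← algebraMap_smul ℂ c.re v, ← add_smul]
          congr 1
          simp
        simp [smul_def, hcv, hgI] }
  exact (hasFDerivAt_of_restrictScalars ℝ (f' := complexDeriv) hg' rfl).differentiableAt

end LeftHolomorphicAt

theorem eq_zero_of_path_of_leftHolomorphicAt {n : ℕ} (hI : I ∈ QS) {g : (Fin n → ℂ) → ℍ}
    {U : Set (Fin n → ℂ)} (hU : IsOpen U) (hg : ∀ z ∈ U, LeftHolomorphicAt I g z)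
    (hreal : ∀ x ∈ U, (∀ l, (x l).im = 0) → g x = 0)
    {γ : ℝ → Fin n → ℂ} (hγ : γ ∈ PathsC n) (hγU : ∀ t ∈ Set.Icc (0 : ℝ) 1, γ t ∈ U) :
    g (γ 1) = 0 :=
  letI := leftNormedSpace hI
  eq_zero_of_path_of_eq_zero_on_real hU
    (fun z hz => ((hg z hz).differentiableAt hI).differentiableWithinAt) hreal hγ hγU

end LeftHolomorphic

section StemAlgebra

lemma semiconjBy_sub_neg {R : Type*} [Ring R] {J K : R} (h : J * J = K * K) :
    SemiconjBy (K - J) (-J) K := by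
  simp only [SemiconjBy, mul_neg, sub_mul, mul_sub, h, neg_sub]

variable {D : Type*} [DivisionRing D] {I J K : D}

lemma semiconjBy_sub_mul_inv_sub (hI : I * I = J * J) (hK : J * J = K * K) :
    SemiconjBy ((K - J) * (I - J)⁻¹) I K :=
  (semiconjBy_sub_neg hK).mul_left (semiconjBy_sub_neg hI.symm).inv_symm_left₀

lemma eq_add_mul_iff (hIJ : I ≠ J) {a b F₁ F₂ : D} :
    a = F₁ + I * F₂ ∧ b = F₁ + J * F₂ ↔ F₂ = (J - I)⁻¹ * (b - a) ∧ F₁ = a - I * F₂ := by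
  have fst_iff : a = F₁ + I * F₂ ↔ F₁ = a - I * F₂ := by rw [eq_sub_iff_add_eq, eq_comm]
  rw [fst_iff, and_comm, eq_inv_mul_iff_mul_eq₀ (sub_ne_zero.2 hIJ.symm)]
  refine and_congr_left ?_
  rintro rfl
  rw [eq_sub_iff_add_eq, eq_comm, sub_mul, sub_add_comm, sub_add_eq_add_sub]

lemma lagrange_weights_add (hIJ : I ≠ J) :
    (K - J) * (I - J)⁻¹ + (K - I) * (J - I)⁻¹ = 1 := by
  rw [← neg_sub J I, inv_neg, mul_neg, neg_add_eq_sub, ← sub_mul, sub_sub_sub_cancel_left,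
    mul_inv_cancel₀ (sub_ne_zero.2 hIJ.symm)]

lemma lagrange_eq_add_mul (hIJ : I ≠ J) (a b : D) :
    (K - J) * (I - J)⁻¹ * a + (K - I) * (J - I)⁻¹ * b =
      a - I * ((J - I)⁻¹ * (b - a)) + K * ((J - I)⁻¹ * (b - a)) := by
  rw [eq_sub_of_add_eq (lagrange_weights_add hIJ)]
  simp only [sub_mul, mul_sub, one_mul, mul_assoc]
  abel

end StemAlgebra

section SliceRegularFunctions

variable {n : ℕ} {Ω : Set (Fin n → ℍ)} {f : (Fin n → ℍ) → ℍ} {I J K : ℍ}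

lemma PsiI_of_real {x : Fin n → ℂ} (hx : ∀ l, (x l).im = 0) (I J : ℍ) :
    PsiI n I x = PsiI n J x := by
  funext l
  simp only [PsiI, hx l, zero_smul]

lemma map_I_smul_of_cauchyRiemann {L : (Fin n → ℂ) →L[ℝ] ℍ} (hI : I ∈ QS)
    (hL : ∀ l, L (Pi.single l 1) + I * L (Pi.single l Complex.I) = 0) (v : Fin n → ℂ) :
    L (Complex.I • v) = I * L v := by
  have map_I (l : Fin n) : L (Pi.single l Complex.I) = I * L (Pi.single l 1) := by
    rw [eq_neg_of_add_eq_zero_left (hL l), mul_neg, ← mul_assoc, mul_self_of_mem_QS hI,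
      neg_one_mul, neg_neg]
  have map_single (l : Fin n) (c : ℂ) :
      L (Pi.single l c) = c.re • L (Pi.single l 1) + c.im • L (Pi.single l Complex.I) := by
    rw [← map_smul, ← map_smul, ← map_add, ← Pi.single_smul, ← Pi.single_smul, ← Pi.single_add]
    simp
  have map_I_single (l : Fin n) (c : ℂ) :
      L (Complex.I • Pi.single l c) = I * L (Pi.single l c) := by
    rw [← Pi.single_smul, map_single, map_single l c, map_I, mul_add, mul_smul_comm,
      mul_smul_comm, ← mul_assoc I I, mul_self_of_mem_QS hI]
    simp [add_comm]
  rw [← Finset.univ_sum_single v, Finset.smul_sum, map_sum, map_sum, Finset.mul_sum]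
  exact Finset.sum_congr rfl fun l _ => map_I_single l (v l)

namespace SliceRegular

lemma leftHolomorphicAt (hΩ : sliceOpen n Ω) (hf : SliceRegular n Ω f) (hI : I ∈ QS)
    {z : Fin n → ℂ} (hz : PsiI n I z ∈ Ω) :
    LeftHolomorphicAt I (fun w => f (PsiI n I w)) z := by
  obtain ⟨differentiable, cauchyRiemann⟩ := hf I hI
  have slice_mem_nhds : PsiI n I ⁻¹' Ω ∈ 𝓝 z := (hΩ.2 I hI).mem_nhds hz
  refine ⟨_, (differentiable.differentiableAt slice_mem_nhds).hasFDerivAt,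
    map_I_smul_of_cauchyRiemann hI fun l => ?_⟩
  simpa only [fderivWithin_of_mem_nhds slice_mem_nhds] using cauchyRiemann z hz l

theorem representation_formula (hΩ : sliceOpen n Ω) (hf : SliceRegular n Ω f)
    {γ : ℝ → Fin n → ℂ} (hγ : γ ∈ PathsC n) (hI : I ∈ sliceUnits n Ω γ)
    (hJ : J ∈ sliceUnits n Ω γ) (hK : K ∈ sliceUnits n Ω γ) (hIJ : I ≠ J) :
    f (PsiI n K (γ 1)) = (K - J) * (I - J)⁻¹ * f (PsiI n I (γ 1)) +
      (K - I) * (J - I)⁻¹ * f (PsiI n J (γ 1)) := by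
  have hI_sq := mul_self_of_mem_QS hI.1
  have hJ_sq := mul_self_of_mem_QS hJ.1
  have hK_sq := mul_self_of_mem_QS hK.1
  have semiconj_I : SemiconjBy ((K - J) * (I - J)⁻¹) I K :=
    semiconjBy_sub_mul_inv_sub (hI_sq.trans hJ_sq.symm) (hJ_sq.trans hK_sq.symm)
  have semiconj_J : SemiconjBy ((K - I) * (J - I)⁻¹) J K :=
    semiconjBy_sub_mul_inv_sub (hJ_sq.trans hI_sq.symm) (hI_sq.trans hK_sq.symm)
  have hU : IsOpen (PsiI n K ⁻¹' Ω ∩ (PsiI n I ⁻¹' Ω ∩ PsiI n J ⁻¹' Ω)) :=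
    (hΩ.2 K hK.1).inter ((hΩ.2 I hI.1).inter (hΩ.2 J hJ.1))
  refine sub_eq_zero.1 (eq_zero_of_path_of_leftHolomorphicAt hK.1 hU
    (g := fun z => f (PsiI n K z) - ((K - J) * (I - J)⁻¹ * f (PsiI n I z) +
      (K - I) * (J - I)⁻¹ * f (PsiI n J z))) ?_ ?_ hγ
    fun t ht => ⟨hK.2 t ht, hI.2 t ht, hJ.2 t ht⟩)
  · rintro z ⟨hzK, hzI, hzJ⟩
    exact (leftHolomorphicAt hΩ hf hK.1 hzK).sub
      (((leftHolomorphicAt hΩ hf hI.1 hzI).const_mul semiconj_I).add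
        ((leftHolomorphicAt hΩ hf hJ.1 hzJ).const_mul semiconj_J))
  · intro x _ hx
    rw [PsiI_of_real hx I K, PsiI_of_real hx J K, ← add_mul, lagrange_weights_add hIJ, one_mul,
      sub_self]

lemma exists_stem_value (hΩ : sliceOpen n Ω) (hf : SliceRegular n Ω f)
    {γ : ℝ → Fin n → ℂ} (hγ : γ ∈ PathsC n) :
    ∃ F : ℍ × ℍ, ∀ K ∈ sliceUnits n Ω γ, f (PsiI n K (γ 1)) = F.1 + K * F.2 := by
  rcases (sliceUnits n Ω γ).subsingleton_or_nontrivial with hS | ⟨I, hI, J, hJ, hIJ⟩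
  · rcases hS.eq_empty_or_singleton with hS | ⟨I, hS⟩
    · exact ⟨0, by simp [hS]⟩
    · exact ⟨(f (PsiI n I (γ 1)), 0), by simp [hS]⟩
  · exact ⟨(_, _), fun K hK =>
      (representation_formula hΩ hf hγ hI hJ hK hIJ).trans (lagrange_eq_add_mul hIJ _ _)⟩

theorem pathSliceFn (hΩ : sliceOpen n Ω) (hf : SliceRegular n Ω f) : PathSliceFn n Ω f := by
  choose! F hF using fun γ (hγ : γ ∈ PathsC n) => exists_stem_value hΩ hf hγ
  exact ⟨F, fun γ hγ => hF γ hγ.1⟩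

end SliceRegular

lemma PathSliceFn.isStemOf_stemF (hf : PathSliceFn n Ω f) : isStemOf n Ω f (stemF n Ω f) := by
  unfold PathSliceFn at hf
  rw [stemF, dif_pos hf]
  exact hf.choose_spec

lemma extendPath_one (γ : ℝ → Fin n → ℂ) (z : Fin n → ℂ) : extendPath n γ z 1 = z := by
  norm_num [extendPath, concatP, segPath]

end SliceRegularFunctions

theorem statement3_general {n : ℕ} {Ω : Set (Fin n → ℍ)} {f : (Fin n → ℍ) → ℍ}
    {F : (ℝ → Fin n → ℂ) → ℍ × ℍ} (hF : isStemOf n Ω f F) {γ : ℝ → Fin n → ℂ}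
    (hγ : γ ∈ PathsC n) {I J : ℍ} (hI : I ∈ sliceUnits n Ω γ) (hJ : J ∈ sliceUnits n Ω γ)
    (hIJ : I ≠ J) :
    (F γ).2 = (J - I)⁻¹ * (f (PsiI n J (γ 1)) - f (PsiI n I (γ 1))) ∧
      (F γ).1 = f (PsiI n I (γ 1)) - I * (F γ).2 ∧
      f (PsiI n I (γ 1)) = (F γ).1 + I * (F γ).2 ∧
      f (PsiI n J (γ 1)) = (F γ).1 + J * (F γ).2 := by
  have eval_I := hF γ ⟨hγ, I, hI⟩ I hI
  have eval_J := hF γ ⟨hγ, I, hI⟩ J hJ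
  obtain ⟨snd_eq, fst_eq⟩ := (eq_add_mul_iff hIJ).1 ⟨eval_I, eval_J⟩
  exact ⟨snd_eq, fst_eq, eval_I, eval_J⟩

theorem statement3 (n : ℕ) (hn : 1 ≤ n) (Ω₁ Ω₂ : Set (Fin n → ℍ))
    (hΩ₁ : sliceOpen n Ω₁) (hrc : realPathConnected n Ω₁)
    (hΩ₂ : sliceOpen n Ω₂) (hsp : stemPreserving n Ω₁ Ω₂)
    (γ : ℝ → Fin n → ℂ) (hγ : γ ∈ PathsIn n Ω₁)
    (f : (Fin n → ℍ) → ℍ) (hf : SliceRegular n Ω₂ f)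
    (r₁ : ℝ) (hr₁ : 0 < r₁)
    (hlt : ENNReal.ofReal r₁ < min (r2Slice n Ω₂ γ) (rPath n Ω₁ γ))
    (I J : ℍ) (hI : I ∈ sliceUnits n Ω₂ γ) (hJ : J ∈ sliceUnits n Ω₂ γ) (hIJ : I ≠ J)
    (hball : pathBall n γ r₁ ⊆ PathsIn n Ω₁)
    (hβ : ∀ β ∈ pathBall n γ r₁, pathInSlice n Ω₂ I β ∧ pathInSlice n Ω₂ J β) :
    ∀ z ∈ Metric.ball (γ 1) r₁,
      (stemF n Ω₂ f (extendPath n γ z)).2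
          = (J - I)⁻¹ * (f (PsiI n J z) - f (PsiI n I z)) ∧
      (stemF n Ω₂ f (extendPath n γ z)).1
          = f (PsiI n I z) - I * (stemF n Ω₂ f (extendPath n γ z)).2 ∧
      f (PsiI n I z) = (stemF n Ω₂ f (extendPath n γ z)).1
          + I * (stemF n Ω₂ f (extendPath n γ z)).2 ∧
      f (PsiI n J z) = (stemF n Ω₂ f (extendPath n γ z)).1
          + J * (stemF n Ω₂ f (extendPath n γ z)).2 := by
  intro z hz
  obtain ⟨hzI, hzJ⟩ := hβ _ ⟨z, hz, rfl⟩
  simpa only [extendPath_one] using statement3_general (hf.pathSliceFn hΩ₂).isStemOf_stemF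
    (hball ⟨z, hz, rfl⟩).1 ⟨hI.1, hzI⟩ ⟨hJ.1, hzJ⟩ hIJ
end
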